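/- arXiv:1902.09592 — 3 statements merged into one kernel-verified Lean document; each statement's English description precedes it below -/
import Mathlib

section
/- Let l, u, t be real numbers with l ≤ t ≤ u. Define Relax(ReLU)(t, l, u) ⊆ ℝ by: {t} if l ≥ 0; {0} if u ≤ 0; and {a : a ≥ t ∧ a ≥ 0 ∧ a ≤ (u/(u−l))·(t − l)} otherwise (i.e., when l < 0 < u). Then max(t, 0) ∈ Relax(ReLU)(t, l, u). -/
open Real

/-- The convex relaxation of the ReLU activation on `[l, u]`. -/
noncomputable def relaxReLU (t l u : ℝ) : Set ℝ :=
  if 0 ≤ l then {t}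
  else if u ≤ 0 then {0}
  else {a : ℝ | a ≥ t ∧ a ≥ 0 ∧ a ≤ (u / (u - l)) * (t - l)}

section Chord

variable {𝕜 : Type*} [Field 𝕜] [LinearOrder 𝕜] [IsStrictOrderedRing 𝕜]

theorem convexOn_le_chord {s : Set 𝕜} {f : 𝕜 → 𝕜} (hf : ConvexOn 𝕜 s f) {l t u : 𝕜}
    (hl : l ∈ s) (hu : u ∈ s) (hlt : l ≤ t) (htu : t ≤ u) :
    f t ≤ f l + (f u - f l) / (u - l) * (t - l) := by
  rcases hlt.eq_or_lt with rfl | hlt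
  · simp
  have ht : t ∈ s := hf.1.ordConnected.out hl hu ⟨hlt.le, htu⟩
  have hslope : (f t - f l) / (t - l) ≤ (f u - f l) / (u - l) :=
    hf.secant_mono hl ht hu hlt.ne' (hlt.trans_le htu).ne' htu
  exact sub_le_iff_le_add'.mp ((div_le_iff₀ (sub_pos.mpr hlt)).mp hslope)

theorem convexOn_max_zero : ConvexOn 𝕜 Set.univ fun x : 𝕜 ↦ max x 0 :=
  (convexOn_id convex_univ).sup (convexOn_const 0 convex_univ)

-- For `l ≤ 0 ≤ u` the right-hand side is the chord of ReLU joining `(l, 0)` to `(u, u)`.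
theorem max_zero_le_chord {l t u : 𝕜} (hl : l ≤ 0) (hu : 0 ≤ u) (hlt : l ≤ t) (htu : t ≤ u) :
    max t 0 ≤ u / (u - l) * (t - l) := by
  simpa only [max_eq_right hl, max_eq_left hu, sub_zero, zero_add] using
    convexOn_le_chord convexOn_max_zero (Set.mem_univ l) (Set.mem_univ u) hlt htu

end Chord

/-- The true ReLU output `max(t, 0)` always satisfies its convex relaxation. -/
theorem relu_mem_relaxReLU (l u t : ℝ) (hlt : l ≤ t) (htu : t ≤ u) :
    max t 0 ∈ relaxReLU t l u := by
  unfold relaxReLU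
  split_ifs with hl hu
  · exact max_eq_left (hl.trans hlt)
  · exact max_eq_right (htu.trans hu)
  · exact ⟨le_max_left t 0, le_max_right t 0,
      max_zero_le_chord (le_of_not_ge hl) (le_of_not_ge hu) hlt htu⟩
end

section
/- Let m ≥ 1, let l, u ∈ ℝᵐ with lⱼ < uⱼ for all j, let d ∈ ℝᵐ, ε ∈ ℝ, and let y ∈ ℝᵐ satisfy lⱼ ≤ yⱼ ≤ uⱼ for all j. Then there exists α ∈ ℝᵐ such that for every j, exp(yⱼ) ≤ αⱼ ≤ G(yⱼ, lⱼ, uⱼ), and ∑ⱼ αⱼ·(dⱼ − ε) = ∑ⱼ exp(yⱼ)·(dⱼ − ε). -/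
open Real Finset

/-- The secant line of `exp` through `(l, exp l)` and `(u, exp u)`. -/
noncomputable def expSecant (t l u : ℝ) : ℝ :=
  ((Real.exp u - Real.exp l) / (u - l)) * t +
    (u * Real.exp l - l * Real.exp u) / (u - l)

theorem le_slope_mul_sub_add_of_convexOn {𝕜 : Type*} [Field 𝕜] [LinearOrder 𝕜]
    [IsStrictOrderedRing 𝕜] {s : Set 𝕜} {f : 𝕜 → 𝕜} (hf : ConvexOn 𝕜 s f) {l t u : 𝕜}
    (hl : l ∈ s) (hu : u ∈ s) (ht : t ∈ Set.Icc l u) :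
    f t ≤ slope f l u * (t - l) + f l := by
  obtain rfl | hlt := ht.1.eq_or_lt
  · simp
  have hts : t ∈ s := hf.1.ordConnected.out hl hu ht
  have slope_le : slope f l t ≤ slope f l u :=
    hf.monotoneOn_slope_gt hl ⟨hts, hlt⟩ ⟨hu, hlt.trans_le ht.2⟩ ht.2
  calc
    f t = slope f l t * (t - l) + f l := by
      rw [mul_comm, ← smul_eq_mul, ← vadd_eq_add, sub_smul_slope_vadd]
    _ ≤ slope f l u * (t - l) + f l := by gcongr

theorem expSecant_eq_slope_mul_sub_add {l u : ℝ} (hlu : l ≠ u) (t : ℝ) :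
    expSecant t l u = slope Real.exp l u * (t - l) + Real.exp l := by
  have hsub : u - l ≠ 0 := sub_ne_zero.2 hlu.symm
  rw [expSecant, slope_def_field]
  field_simp
  ring

theorem exp_le_expSecant {l t u : ℝ} (hlu : l < u) (ht : t ∈ Set.Icc l u) :
    Real.exp t ≤ expSecant t l u := by
  rw [expSecant_eq_slope_mul_sub_add hlu.ne]
  exact le_slope_mul_sub_add_of_convexOn convexOn_exp (Set.mem_univ l) (Set.mem_univ u) ht

/-- Soundness of the softmax relaxation `C_smax`: for logits `y` in the box
`[l, u]` there exists `α` with `exp(yⱼ) ≤ αⱼ ≤ G(yⱼ, lⱼ, uⱼ)` for all `j` and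
`∑ⱼ αⱼ(dⱼ − ε) = ∑ⱼ exp(yⱼ)(dⱼ − ε)`. -/
theorem softmax_relaxation_sound (m : ℕ) (hm : 1 ≤ m)
    (l u : Fin m → ℝ) (hlu : ∀ j, l j < u j)
    (d : Fin m → ℝ) (ε : ℝ)
    (y : Fin m → ℝ) (hy : ∀ j, l j ≤ y j ∧ y j ≤ u j) :
    ∃ α : Fin m → ℝ,
      (∀ j, Real.exp (y j) ≤ α j ∧ α j ≤ expSecant (y j) (l j) (u j)) ∧
        ∑ j, α j * (d j - ε) = ∑ j, Real.exp (y j) * (d j - ε) :=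
  ⟨fun j => Real.exp (y j), fun j => ⟨le_rfl, exp_le_expSecant (hlu j) (hy j)⟩, rfl⟩
end

section
/- Let n, m ≥ 1 and let Q ∈ ℝ^{(1+n+m)×(1+n+m)}. Let l_x, u_x ∈ ℝⁿ and l_y, u_y ∈ ℝᵐ, and let x ∈ ℝⁿ, y ∈ ℝᵐ satisfy l_x ≤ x ≤ u_x and l_y ≤ y ≤ u_y componentwise. Set α := (1, x, y) ∈ ℝ^{1+n+m}, l := (1, l_x, l_y), u := (1, u_x, u_y), and z := αᵀ Q α. Then there exists X ∈ ℝ^{(1+n+m)×(1+n+m)} such that z = Tr(Q·X) and X satisfies all the constraints of Relax(Quad)(α, l, u), namely X_{ij} − lᵢαⱼ − αᵢlⱼ + lᵢlⱼ ≥ 0, X_{ij} − uᵢαⱼ − αᵢuⱼ + uᵢuⱼ ≥ 0, X_{ij} − lᵢαⱼ − αᵢuⱼ + lᵢuⱼ ≤ 0 for all i, j, αᵢ² ≤ X_{ii} ≤ (lᵢ+uᵢ)αᵢ − uᵢlᵢ for all i, and X − ααᵀ is positive semidefinite. -/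
open Matrix

/-!
The matrix `X = ααᵀ` is feasible: it makes the semidefinite constraint and the lower diagonal bound
equalities, and every other constraint expands a product of two nonnegative gaps `αᵢ - lᵢ` or
`uᵢ - αᵢ`, which is the two-term rearrangement inequality.
-/

section Trace

variable {ι κ R : Type*} [Fintype ι] [Fintype κ] [NonUnitalCommSemiring R]

theorem trace_mul_vecMulVec (A : Matrix ι κ R) (v : κ → R) (w : ι → R) :
    (A * vecMulVec v w).trace = w ⬝ᵥ A *ᵥ v := by
  rw [mul_vecMulVec, trace_vecMulVec, dotProduct_comm]

end Trace

section Relaxation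

variable {ι R : Type*} [CommRing R] [PartialOrder R] [StarRing R]

/-- The constraint system `Relax(Quad)(α, l, u)` on a matrix `X` standing for `ααᵀ`: the McCormick
envelope of each product `αᵢαⱼ` over the box `[l, u]`, the bounds of each `Xᵢᵢ` by the square `αᵢ²`
and by the secant of `t ↦ t²` over `[lᵢ, uᵢ]`, and the semidefinite relaxation of `X = ααᵀ`. The
product `ααᵀ` uses the plain transpose even when the star operation of `R` is nontrivial. -/
structure QuadRelaxation (α l u : ι → R) (X : Matrix ι ι R) : Prop where
  mccormick_lower (i j : ι) : 0 ≤ X i j - l i * α j - α i * l j + l i * l j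
  mccormick_upper (i j : ι) : 0 ≤ X i j - u i * α j - α i * u j + u i * u j
  mccormick_mixed (i j : ι) : X i j - l i * α j - α i * u j + l i * u j ≤ 0
  sq_le_diag (i : ι) : α i ^ 2 ≤ X i i
  diag_le_secant (i : ι) : X i i ≤ (l i + u i) * α i - u i * l i
  posSemidef : (X - vecMulVec α α).PosSemidef

variable [IsOrderedRing R] {α l u : ι → R}

theorem quadRelaxation_vecMulVec_self (hl : l ≤ α) (hu : α ≤ u) :
    QuadRelaxation α l u (vecMulVec α α) where
  mccormick_lower i j := by
    rw [vecMulVec_apply]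
    linear_combination mul_add_mul_le_mul_add_mul (hl i) (hl j)
  mccormick_upper i j := by
    rw [vecMulVec_apply]
    linear_combination mul_add_mul_le_mul_add_mul (hu i) (hu j)
  mccormick_mixed i j := by
    rw [vecMulVec_apply]
    linear_combination mul_add_mul_le_mul_add_mul (hl i) (hu j)
  sq_le_diag i := (sq (α i)).le
  diag_le_secant i := by
    rw [vecMulVec_apply]
    linear_combination mul_add_mul_le_mul_add_mul (hl i) (hu i)
  posSemidef := by
    rw [sub_self]
    exact .zero

theorem quadratic_spec_relaxation_sound_general [Fintype ι] (Q : Matrix ι ι R)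
    (hl : l ≤ α) (hu : α ≤ u) :
    ∃ X : Matrix ι ι R, α ⬝ᵥ Q *ᵥ α = (Q * X).trace ∧ QuadRelaxation α l u X :=
  ⟨vecMulVec α α, (trace_mul_vecMulVec Q α α).symm, quadRelaxation_vecMulVec_self hl hu⟩

end Relaxation

/-- Containment `T(F, S_in, S_out) ⊆ C_quad` for a quadratic specification
`F(x, y) = [1; x; y]ᵀ Q [1; x; y]` with box-bounded `x` and `y`: with
`α = (1, x, y)`, `l = (1, l_x, l_y)`, `u = (1, u_x, u_y)` and `z = αᵀQα`,
there is an `X` (namely `ααᵀ`) with `z = Tr(Q·X)` satisfying all constraints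
of `Relax(Quad)(α, l, u)`. -/
theorem quadratic_spec_relaxation_sound (n m : ℕ) (hn : 1 ≤ n) (hm : 1 ≤ m)
    (Q : Matrix (Unit ⊕ Fin n ⊕ Fin m) (Unit ⊕ Fin n ⊕ Fin m) ℝ)
    (lx ux : Fin n → ℝ) (ly uy : Fin m → ℝ)
    (x : Fin n → ℝ) (y : Fin m → ℝ)
    (hx : ∀ i, lx i ≤ x i ∧ x i ≤ ux i)
    (hy : ∀ j, ly j ≤ y j ∧ y j ≤ uy j)
    (α l u : Unit ⊕ Fin n ⊕ Fin m → ℝ)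
    (hα : α = Sum.elim (fun _ => 1) (Sum.elim x y))
    (hl : l = Sum.elim (fun _ => 1) (Sum.elim lx ly))
    (hu : u = Sum.elim (fun _ => 1) (Sum.elim ux uy))
    (z : ℝ) (hz : z = α ⬝ᵥ (Q *ᵥ α)) :
    ∃ X : Matrix (Unit ⊕ Fin n ⊕ Fin m) (Unit ⊕ Fin n ⊕ Fin m) ℝ,
      z = (Q * X).trace ∧
      (∀ i j, X i j - l i * α j - α i * l j + l i * l j ≥ 0) ∧
        (∀ i j, X i j - u i * α j - α i * u j + u i * u j ≥ 0) ∧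
          (∀ i j, X i j - l i * α j - α i * u j + l i * u j ≤ 0) ∧
            (∀ i, α i ^ 2 ≤ X i i ∧ X i i ≤ (l i + u i) * α i - u i * l i) ∧
              (X - Matrix.vecMulVec α α).PosSemidef := by
  have hlα : l ≤ α := by
    rw [hl, hα, Sum.elim_le_elim_iff, Sum.elim_le_elim_iff]
    exact ⟨le_rfl, fun i ↦ (hx i).1, fun j ↦ (hy j).1⟩
  have hαu : α ≤ u := by
    rw [hα, hu, Sum.elim_le_elim_iff, Sum.elim_le_elim_iff]
    exact ⟨le_rfl, fun i ↦ (hx i).2, fun j ↦ (hy j).2⟩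
  obtain ⟨X, hX, hrel⟩ := quadratic_spec_relaxation_sound_general Q hlα hαu
  exact ⟨X, hz.trans hX, hrel.mccormick_lower, hrel.mccormick_upper, hrel.mccormick_mixed,
    fun i ↦ ⟨hrel.sq_le_diag i, hrel.diag_le_secant i⟩, hrel.posSemidef⟩
end
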